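/- arXiv:1710.05136 — 2 statements merged into one kernel-verified Lean document; each statement's English description precedes it below -/
import Mathlib

section
/- Let S be a Polish space with its Borel σ-field and S' a separable metric space with its Borel σ-field. Let (μₙ)ₙ₌₀,₁,₂,… be probability measures on S such that μₙ converges weakly to μ₀ as n → ∞. Let h : S → S' be a Borel measurable map for which there exists a Borel set S̃ ⊆ S with μₙ(S̃) = 1 for every n = 0, 1, 2, … and such that the restriction of h to S̃ is continuous. Then the pushforward measures μₙ ∘ h⁻¹ converge weakly to μ₀ ∘ h⁻¹ as n → ∞. -/
open MeasureTheory Filter Topology BoundedContinuousFunction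

/-- **Mapping theorem (variant of the continuous mapping theorem).**
Let `S` be a Polish space and `S'` a separable metric space, both with their
Borel σ-fields.  Let `μₙ` (`n = 0, 1, 2, …`) be probability measures on `S`
with `μₙ → μ₀` weakly.  Let `h : S → S'` be measurable and suppose there is a
Borel set `S̃` with `μₙ(S̃) = 1` for all `n` such that the restriction of `h`
to `S̃` is continuous.  Then `μₙ ∘ h⁻¹ → μ₀ ∘ h⁻¹` weakly. -/
theorem mapping_theorem
    {S : Type*} [TopologicalSpace S] [PolishSpace S]
    [MeasurableSpace S] [BorelSpace S]
    {S' : Type*} [MetricSpace S'] [TopologicalSpace.SeparableSpace S']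
    [MeasurableSpace S'] [BorelSpace S']
    (μ : ℕ → Measure S) (hprob : ∀ n, IsProbabilityMeasure (μ n))
    (hweak : ∀ g : S →ᵇ ℝ,
      Tendsto (fun n => ∫ x, g x ∂(μ n)) atTop (𝓝 (∫ x, g x ∂(μ 0))))
    (h : S → S') (hmeas : Measurable h)
    (Stilde : Set S) (hSmeas : MeasurableSet Stilde)
    (hfull : ∀ n, μ n Stilde = 1)
    (hcont : Continuous (Stilde.restrict h)) :
    ∀ g : S' →ᵇ ℝ,
      Tendsto (fun n => ∫ y, g y ∂((μ n).map h)) atTop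
        (𝓝 (∫ y, g y ∂((μ 0).map h))) := by
  letI : MetricSpace S := TopologicalSpace.metrizableSpaceMetric S
  let P : ℕ → ProbabilityMeasure S := fun n => ⟨μ n, hprob n⟩
  have hP : Tendsto P atTop (𝓝 (P 0)) :=
    ProbabilityMeasure.tendsto_iff_forall_integral_tendsto.2 hweak
  let Q : ℕ → ProbabilityMeasure S' := fun n => (P n).map hmeas.aemeasurable
  have hQ : Tendsto Q atTop (𝓝 (Q 0)) := by
    apply tendsto_of_forall_isOpen_le_liminf'
    intro G hG
    obtain ⟨U, hU, hUG⟩ := isOpen_induced_iff.1 (hG.preimage hcont)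
    have key : ∀ n, (Q n : Measure S') G = (P n : Measure S) U := by
      intro n
      have e : (Q n : Measure S') G = μ n (h ⁻¹' G) :=
        Measure.map_apply hmeas hG.measurableSet
      rw [e]
      have hae : ∀ᵐ x ∂(μ n), x ∈ Stilde := by
        have := hprob n
        exact (mem_ae_iff_prob_eq_one hSmeas).2 (hfull n)
      apply measure_congr
      filter_upwards [hae] with x hx
      have := Set.ext_iff.1 hUG ⟨x, hx⟩
      exact propext this.symm
    have key2 : (fun n => (Q n : Measure S') G) = fun n => (P n : Measure S) U := funext key
    change (Q 0 : Measure S') G ≤ liminf (fun n => (Q n : Measure S') G) atTop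
    rw [key2, key 0]
    exact ProbabilityMeasure.le_liminf_measure_open_of_tendsto hP hU
  exact ProbabilityMeasure.tendsto_iff_forall_integral_tendsto.1 hQ
end

section
/- Assume X is nonempty, and for y, y' ∈ ℝᵐ set S(y, y') := sup_{x ∈ X} ( ‖y − F(x)‖ ∨ ‖y' − F(x)‖ ), which is finite since F is bounded. Then the Hellinger distance between the posteriors μʸ and μʸ', given by d_Hell(μʸ, μʸ') = sqrt( (1/2) ∫_X ( sqrt(Ψ(x; y)/Z(y)) − sqrt(Ψ(x; y')/Z(y')) )² dμ₀(x) ), satisfies the Lipschitz stability estimate d_Hell(μʸ, μʸ') ≤ exp( 3 S(y, y')² / (4σ²) ) · ( S(y, y') / σ ) · ( ‖y − y'‖ / σ ). -/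
open MeasureTheory Real


lemma aux_exp_lip {u v : ℝ} (hu : u ≤ 0) (hv : v ≤ 0) : |Real.exp u - Real.exp v| ≤ |u - v| := by
  wlog h : v ≤ u generalizing u v
  · rw [abs_sub_comm, abs_sub_comm u v]
    exact this hv hu (le_of_not_ge h)
  have h1 : Real.exp v ≤ Real.exp u := Real.exp_le_exp.2 h
  rw [abs_of_nonneg (by linarith), abs_of_nonneg (by linarith)]
  have h2 : Real.exp v = Real.exp u * Real.exp (v - u) := by rw [← Real.exp_add]; ring_nf
  have h3 := Real.add_one_le_exp (v - u)
  have h4 : Real.exp u ≤ 1 := Real.exp_le_one_iff.2 hu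
  have h5 := Real.exp_pos u
  nlinarith

lemma aux_l2 {X : Type*} [MeasurableSpace X] (μ : Measure X) [IsProbabilityMeasure μ]
    (f h : X → ℝ) (hf : Measurable f) (hh : Measurable h)
    (f0 : ∀ x, 0 ≤ f x) (f1 : ∀ x, f x ≤ 1) (h0 : ∀ x, 0 ≤ h x) (h1 : ∀ x, h x ≤ 1)
    (L E : ℝ) (hE : 0 < E) (hL : ∀ x, |f x - h x| ≤ L)
    (fE : ∀ x, E ≤ f x ^ 2) (hhE : ∀ x, E ≤ h x ^ 2) :
    ∫ x, (f x / √(∫ x, f x ^ 2 ∂μ) - h x / √(∫ x, h x ^ 2 ∂μ)) ^ 2 ∂μ ≤ L ^ 2 / E := by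
  have key : ∀ k : X → ℝ, Measurable k → (∀ x, 0 ≤ k x) → (∀ x, k x ≤ 1) → Integrable k μ := by
    intro k hk k0 k1
    refine Integrable.of_bound hk.aestronglyMeasurable 1 (Filter.Eventually.of_forall fun x => ?_)
    rw [Real.norm_eq_abs, abs_of_nonneg (k0 x)]
    exact k1 x
  have i1 : Integrable (fun x => f x ^ 2) μ := key _ (hf.pow_const 2) (fun x => sq_nonneg _)
    (fun x => pow_le_one₀ (f0 x) (f1 x))
  have i2 : Integrable (fun x => h x ^ 2) μ := key _ (hh.pow_const 2) (fun x => sq_nonneg _)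
    (fun x => pow_le_one₀ (h0 x) (h1 x))
  have i3 : Integrable (fun x => f x * h x) μ := key _ (hf.mul hh)
    (fun x => mul_nonneg (f0 x) (h0 x)) (fun x => mul_le_one₀ (f1 x) (h0 x) (h1 x))
  have exp3 : ∀ a b c : ℝ, ∫ x, (a * f x ^ 2 + b * h x ^ 2 - c * (f x * h x)) ∂μ
      = a * ∫ x, f x ^ 2 ∂μ + b * ∫ x, h x ^ 2 ∂μ - c * ∫ x, f x * h x ∂μ := by
    intro a b c
    have e1 := integral_sub ((i1.const_mul a).add (i2.const_mul b)) (i3.const_mul c)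
    have e2 := integral_add (i1.const_mul a) (i2.const_mul b)
    simp only [Pi.add_apply, integral_const_mul] at e1 e2
    rw [e1, e2]
  have i4 : ∀ a b c : ℝ, Integrable (fun x => a * f x ^ 2 + b * h x ^ 2 - c * (f x * h x)) μ :=
    fun a b c => ((i1.const_mul a).add (i2.const_mul b)).sub (i3.const_mul c)
  have zE : E ≤ ∫ x, f x ^ 2 ∂μ := by
    have := integral_mono (integrable_const E) i1 fE
    simpa using this
  have zE' : E ≤ ∫ x, h x ^ 2 ∂μ := by
    have := integral_mono (integrable_const E) i2 hhE
    simpa using this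
  have hd : ∫ x, (1 * f x ^ 2 + 1 * h x ^ 2 - 2 * (f x * h x)) ∂μ ≤ L ^ 2 := by
    have := integral_mono (i4 1 1 2) (integrable_const (L ^ 2)) (fun x => by
      have h2 := sq_le_sq' (abs_le.1 (hL x)).1 (abs_le.1 (hL x)).2
      show 1 * f x ^ 2 + 1 * h x ^ 2 - 2 * (f x * h x) ≤ L ^ 2
      nlinarith)
    simpa using this
  rw [exp3] at hd
  set z := ∫ x, f x ^ 2 ∂μ
  set z' := ∫ x, h x ^ 2 ∂μ
  set I := ∫ x, f x * h x ∂μ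
  have w1 : √z ^ 2 = z := Real.sq_sqrt (by linarith)
  have w2 : √z' ^ 2 = z' := Real.sq_sqrt (by linarith)
  have p1 : 0 < √z := Real.sqrt_pos.2 (by linarith)
  have p2 : 0 < √z' := Real.sqrt_pos.2 (by linarith)
  have hp : E ≤ √z * √z' := by
    have e1 : √E ≤ √z := Real.sqrt_le_sqrt zE
    have e2 : √E ≤ √z' := Real.sqrt_le_sqrt zE'
    have e3 : √E * √E = E := Real.mul_self_sqrt hE.le
    have := mul_le_mul e1 e2 (Real.sqrt_nonneg _) p1.le
    linarith
  have e : ∫ x, (f x / √z - h x / √z') ^ 2 ∂μ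
      = ∫ x, (1 / z * f x ^ 2 + 1 / z' * h x ^ 2 - 2 / (√z * √z') * (f x * h x)) ∂μ := by
    congr 1
    ext x
    nth_rewrite 2 [← w1]
    nth_rewrite 2 [← w2]
    field_simp
    ring
  rw [e, exp3]
  have e5 : 1 / z * z = 1 := one_div_mul_cancel (by linarith)
  have e6 : 1 / z' * z' = 1 := one_div_mul_cancel (by linarith)
  rw [e5, e6]
  calc 1 + 1 - 2 / (√z * √z') * I = (2 * (√z * √z') - 2 * I) / (√z * √z') := by
        field_simp
        ring
    _ ≤ L ^ 2 / (√z * √z') := by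
        apply div_le_div_of_nonneg_right _ (by positivity)
        nlinarith [sq_nonneg (√z - √z')]
    _ ≤ L ^ 2 / E := div_le_div_of_nonneg_left (sq_nonneg _) hE hp

/-- **Lipschitz stability of the posterior in Hellinger distance.**
With the Gaussian likelihood `Ψ(x; y) = (2πσ²)^(-m/2) exp(-‖y - F x‖²/(2σ²))`,
normalization `Z(y) = ∫ Ψ(x; y) dμ₀(x) > 0`, nonempty `X`, and
`S(y, y') = sup_{x ∈ X} (‖y - F x‖ ∨ ‖y' - F x‖)`, the Hellinger distance
`d_Hell(μʸ, μʸ') = sqrt((1/2) ∫ (sqrt(Ψ(x;y)/Z(y)) - sqrt(Ψ(x;y')/Z(y')))² dμ₀)`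
between the posteriors satisfies
`d_Hell(μʸ, μʸ') ≤ exp(3 S(y,y')²/(4σ²)) · (S(y,y')/σ) · (‖y - y'‖/σ)`. -/
theorem posterior_hellinger_lipschitz
    {X : Type*} [MeasurableSpace X] (hne : Nonempty X)
    (μ₀ : Measure X) (hμ₀ : IsProbabilityMeasure μ₀)
    (m : ℕ) (hm : 0 < m) (σ : ℝ) (hσ : 0 < σ)
    (F : X → EuclideanSpace ℝ (Fin m)) (hF : Measurable F)
    (C_F : ℝ) (hCF : 0 < C_F) (hFb : ∀ x, ‖F x‖ < C_F)
    (Ψ : X → EuclideanSpace ℝ (Fin m) → ℝ)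
    (hΨ : ∀ x y, Ψ x y =
      (2 * π * σ ^ 2) ^ (-(m : ℝ) / 2) * Real.exp (-‖y - F x‖ ^ 2 / (2 * σ ^ 2)))
    (Z : EuclideanSpace ℝ (Fin m) → ℝ)
    (hZ : ∀ y, Z y = ∫ x, Ψ x y ∂μ₀) (hZpos : ∀ y, 0 < Z y) :
    ∀ y y' : EuclideanSpace ℝ (Fin m), ∀ S : ℝ,
      S = ⨆ x : X, max ‖y - F x‖ ‖y' - F x‖ →
      Real.sqrt ((1 / 2) *
          ∫ x, (Real.sqrt (Ψ x y / Z y) - Real.sqrt (Ψ x y' / Z y')) ^ 2 ∂μ₀)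
        ≤ Real.exp (3 * S ^ 2 / (4 * σ ^ 2)) * (S / σ) * (‖y - y'‖ / σ) := by
  intro y y' S hS
  have bdd : BddAbove (Set.range fun x : X => max ‖y - F x‖ ‖y' - F x‖) := by
    refine ⟨max (‖y‖ + C_F) (‖y'‖ + C_F), ?_⟩
    rintro _ ⟨x, rfl⟩
    have := hFb x
    exact max_le_max ((norm_sub_le _ _).trans (by linarith)) ((norm_sub_le _ _).trans (by linarith))
  have hle : ∀ x, max ‖y - F x‖ ‖y' - F x‖ ≤ S := fun x => hS ▸ le_ciSup bdd x
  have ha : ∀ x, ‖y - F x‖ ≤ S := fun x => (le_max_left _ _).trans (hle x)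
  have hb : ∀ x, ‖y' - F x‖ ≤ S := fun x => (le_max_right _ _).trans (hle x)
  have S0 : 0 ≤ S := (norm_nonneg _).trans (ha hne.some)
  have hc : 0 < (2 * π * σ ^ 2) ^ (-(m : ℝ) / 2) := Real.rpow_pos_of_pos (by positivity) _
  set c := (2 * π * σ ^ 2) ^ (-(m : ℝ) / 2) with hcdef
  let f : EuclideanSpace ℝ (Fin m) → X → ℝ := fun y x => Real.exp (-(‖y - F x‖ ^ 2) / (4 * σ ^ 2))
  have hfm : ∀ y, Measurable (f y) := by
    intro y
    have : Measurable fun x => ‖y - F x‖ := (hF.const_sub y).norm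
    exact Real.measurable_exp.comp (((this.pow_const 2).neg).div_const _)
  have neg : ∀ y x, -(‖y - F x‖ ^ 2) / (4 * σ ^ 2) ≤ 0 := fun y x =>
    div_nonpos_of_nonpos_of_nonneg (by nlinarith [sq_nonneg ‖y - F x‖]) (by positivity)
  have hfsq : ∀ y x, f y x ^ 2 = Real.exp (-‖y - F x‖ ^ 2 / (2 * σ ^ 2)) := by
    intro y x
    rw [← Real.exp_nat_mul]
    congr 1
    push_cast
    field_simp
    ring
  have hΨf : ∀ x y, Ψ x y = c * f y x ^ 2 := fun x y => by rw [hΨ, hfsq]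
  have hs : ∀ x y, √(Ψ x y / Z y) = f y x / √(∫ x, f y x ^ 2 ∂μ₀) := by
    intro x y
    rw [hZ]
    simp only [hΨf]
    rw [integral_const_mul, mul_div_mul_left _ _ hc.ne', Real.sqrt_div (sq_nonneg _),
      Real.sqrt_sq (Real.exp_pos _).le]
  simp only [hs]
  have hEx : ∀ y x, ‖y - F x‖ ≤ S → Real.exp (-S ^ 2 / (2 * σ ^ 2)) ≤ f y x ^ 2 := by
    intro y x h
    rw [hfsq]
    apply Real.exp_le_exp.2
    apply div_le_div_of_nonneg_right _ (by positivity)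
    nlinarith [norm_nonneg (y - F x)]
  have main := aux_l2 μ₀ (f y) (f y') (hfm y) (hfm y') (fun x => (Real.exp_pos _).le)
    (fun x => Real.exp_le_one_iff.2 (neg y x)) (fun x => (Real.exp_pos _).le)
    (fun x => Real.exp_le_one_iff.2 (neg y' x)) (S * ‖y - y'‖ / (2 * σ ^ 2))
    (Real.exp (-S ^ 2 / (2 * σ ^ 2))) (Real.exp_pos _) (by
      intro x
      refine (aux_exp_lip (neg y x) (neg y' x)).trans ?_
      rw [← sub_div, abs_div, abs_of_pos (show 0 < 4 * σ ^ 2 by positivity)]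
      have h1 : |‖y - F x‖ - ‖y' - F x‖| ≤ ‖y - y'‖ := by
        have := abs_norm_sub_norm_le (y - F x) (y' - F x)
        simpa using this
      have h2 : |(-(‖y - F x‖ ^ 2) - -(‖y' - F x‖ ^ 2))| ≤ 2 * S * ‖y - y'‖ := by
        have : (-(‖y - F x‖ ^ 2) - -(‖y' - F x‖ ^ 2))
          = -((‖y - F x‖ + ‖y' - F x‖) * (‖y - F x‖ - ‖y' - F x‖)) := by ring
        rw [this, abs_neg, abs_mul, abs_of_nonneg (by positivity)]
        exact mul_le_mul (by linarith [ha x, hb x]) h1 (abs_nonneg _) (by positivity)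
      calc _ ≤ 2 * S * ‖y - y'‖ / (4 * σ ^ 2) := div_le_div_of_nonneg_right h2 (by positivity)
        _ = _ := by field_simp; ring)
    (fun x => hEx y x (ha x)) (fun x => hEx y' x (hb x))
  apply Real.sqrt_le_iff.2
  refine ⟨by positivity, ?_⟩
  have hE1 : (Real.exp (-S ^ 2 / (2 * σ ^ 2)))⁻¹ ≤ Real.exp (3 * S ^ 2 / (4 * σ ^ 2)) ^ 2 := by
    rw [← Real.exp_neg, ← Real.exp_nat_mul]
    apply Real.exp_le_exp.2
    have : 0 ≤ S ^ 2 / σ ^ 2 := by positivity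
    have e1 : -(-S ^ 2 / (2 * σ ^ 2)) = (S ^ 2 / σ ^ 2) / 2 := by field_simp
    have e2 : ((2 : ℕ) : ℝ) * (3 * S ^ 2 / (4 * σ ^ 2)) = 3 / 2 * (S ^ 2 / σ ^ 2) := by
      push_cast
      field_simp
      ring
    rw [e1, e2]
    linarith
  rw [div_eq_mul_inv] at main
  have h3 := main.trans (mul_le_mul_of_nonneg_left hE1 (sq_nonneg _))
  have h4 : (Real.exp (3 * S ^ 2 / (4 * σ ^ 2)) * (S / σ) * (‖y - y'‖ / σ)) ^ 2
      = 4 * ((S * ‖y - y'‖ / (2 * σ ^ 2)) ^ 2 * Real.exp (3 * S ^ 2 / (4 * σ ^ 2)) ^ 2) := by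
    field_simp
    ring
  rw [h4]
  have h5 : 0 ≤ (S * ‖y - y'‖ / (2 * σ ^ 2)) ^ 2 * Real.exp (3 * S ^ 2 / (4 * σ ^ 2)) ^ 2 := by
    positivity
  linarith
end
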